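/- arXiv:2406.05067 — 4 statements merged into one kernel-verified Lean document; each statement's English description precedes it below -/
import Mathlib

section
/- There is an algebra isomorphism Φ from the universal enveloping algebra U(g[u]) of the current algebra onto the associated graded algebra Gr_κ g[t,t⁻¹] of U(g[t,t⁻¹]) with respect to the filtration (κ_r), which sends x u^r to x̄_{r,0} for every x∈g and r≥0. -/
/-!
Substituting `t = 1 + u` sends `x (t - 1)^r t^k` to `x u^r (1 + u)^k`, a series with leading term
`x u^r`. Recording the degree in `u` by a formal variable `X`, this defines an algebra homomorphism
from `U(g[t,t⁻¹])` to `U(g[u])⟦X⟧`. It maps `κ_r` into the series of order at least `r`, because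
`κ` is the smallest decreasing multiplicative filtration with `x (t - 1)^r t^k` in degree `r`.
Taking leading coefficients then gives an algebra homomorphism from `Gr_κ` to `U(g[u])`. It is
inverse to `x u^r ↦ x̄_{r,0}`, because `x_{r,k+1} - x_{r,k} = x_{r+1,k}` shows that `x̄_{r,k}` does
not depend on `k`, so that the `x̄_{r,0}` generate `Gr_κ`.
-/

open Finsupp

noncomputable section

/-- The element `x_{r,k} = x (t−1)^r t^k = ∑_{s=0}^r (−1)^{r−s} (r choose s) x t^{s+k}`
of the loop algebra, expressed via the structure maps `T k : g →ₗ[ℂ] L`, `x ↦ x t^k`. -/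
def xrk {g L : Type*} [AddCommGroup g] [Module ℂ g] [AddCommGroup L] [Module ℂ L]
    (T : ℤ → g →ₗ[ℂ] L) (r : ℕ) (k : ℤ) (x : g) : L :=
  ∑ s ∈ Finset.range (r + 1), ((-1 : ℤ) ^ (r - s) * (r.choose s)) • T ((s : ℤ) + k) x

/-- The two-sided ideal `κ_r` of `U(g[t,t⁻¹])` generated by the products
`(x₁)_{r₁,k₁} ⋯ (x_a)_{r_a,k_a}` with `r₁ + ⋯ + r_a ≥ r`. -/
def kappa {g L : Type*} [AddCommGroup g] [Module ℂ g] [LieRing L] [LieAlgebra ℂ L]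
    (T : ℤ → g →ₗ[ℂ] L) (r : ℕ) : TwoSidedIdeal (UniversalEnvelopingAlgebra ℂ L) :=
  TwoSidedIdeal.span {u | ∃ (a : ℕ) (xs : Fin a → g) (rs : Fin a → ℕ) (ks : Fin a → ℤ),
    r ≤ ∑ i, rs i ∧
    u = (List.ofFn fun i =>
          UniversalEnvelopingAlgebra.ι ℂ (xrk T (rs i) (ks i) (xs i))).prod}

section LinearMap

variable {R V W N : Type*} [CommRing R] [AddCommGroup V] [Module R V] [AddCommGroup W] [Module R W]
  [AddCommGroup N] [Module R N]

theorem exists_linearMap_comp_eq_of_ker_le (p : V →ₗ[R] W) (q : V →ₗ[R] N)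
    (hp : Function.Surjective p) (h : LinearMap.ker p ≤ LinearMap.ker q) :
    ∃ f : W →ₗ[R] N, f ∘ₗ p = q := by
  refine ⟨(LinearMap.ker p).liftQ q h ∘ₗ (p.quotKerEquivOfSurjective hp).symm.toLinearMap, ?_⟩
  ext v
  simp only [LinearMap.comp_apply, LinearEquiv.coe_coe,
    LinearMap.quotKerEquivOfSurjective_symm_apply, Submodule.liftQ_apply]

theorem single_mem_submodule {I : Type*} {F : I → Submodule R V} {r : I} {v : V} (hv : v ∈ F r) :
    single r v ∈ Finsupp.submodule F :=
  (comap_lsingle_submodule F r).ge hv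

end LinearMap

section ModuleSum

variable {R I g L : Type*} [CommSemiring R] [AddCommMonoid g] [Module R g] [AddCommMonoid L]
  [Module R L] {T : I → g →ₗ[R] L}

theorem induction_of_surjective_sum
    (hT : Function.Surjective fun m : I →₀ g => m.sum fun k x => T k x)
    {p : L → Prop} (map : ∀ k x, p (T k x)) (zero : p 0)
    (add : ∀ a b, p a → p b → p (a + b)) (a : L) : p a := by
  obtain ⟨m, rfl⟩ := hT a
  exact Finset.sum_induction _ p add zero fun k _ => map k _

theorem exists_linearMap_of_bijective_sum {M : Type*} [AddCommMonoid M] [Module R M]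
    (hT : Function.Bijective fun m : I →₀ g => m.sum fun k x => T k x) (f : I → g →ₗ[R] M) :
    ∃ F : L →ₗ[R] M, ∀ k x, F (T k x) = f k x := by
  let e : (I →₀ g) ≃ₗ[R] L := LinearEquiv.ofBijective (lsum R T) hT
  have he (k : I) (x : g) : e.symm (T k x) = single k x :=
    e.symm_apply_eq.2 (lsum_single R T k x).symm
  refine ⟨lsum R f ∘ₗ e.symm, fun k x => ?_⟩
  rw [LinearMap.comp_apply, LinearEquiv.coe_coe, he, lsum_single]

end ModuleSum

section EnvelopingAlgebra

attribute [local instance] LieRing.ofAssociativeRing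

open UniversalEnvelopingAlgebra (ι lift lift_ι_apply)

variable {R L : Type*} [CommRing R] [LieRing L] [LieAlgebra R L]

theorem subalgebra_eq_top_of_forall_ι_mem {S : Subalgebra R (UniversalEnvelopingAlgebra R L)}
    (hS : ∀ a : L, ι R a ∈ S) : S = ⊤ := by
  let f : L →ₗ⁅R⁆ S :=
    { (ι R).toLinearMap.codRestrict S.toSubmodule hS with
      map_lie' := fun {a b} => Subtype.ext ((ι R).map_lie a b) }
  have hf : S.val.comp (lift R f) = AlgHom.id R _ := by
    ext a
    exact congrArg S.val (lift_ι_apply R f a)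
  refine Algebra.eq_top_iff.2 fun u => ?_
  rw [← AlgHom.id_apply (R := R) u, ← hf]
  exact (lift R f u).2

theorem subalgebra_eq_top_of_forall_ι_apply_mem {I g : Type*} [AddCommMonoid g] [Module R g]
    {T : I → g →ₗ[R] L}
    (hT : Function.Surjective fun m : I →₀ g => m.sum fun k x => T k x)
    {S : Subalgebra R (UniversalEnvelopingAlgebra R L)} (hS : ∀ k x, ι R (T k x) ∈ S) : S = ⊤ := by
  refine subalgebra_eq_top_of_forall_ι_mem <|
    induction_of_surjective_sum hT hS ?_ fun a b ha hb => ?_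
  · rw [map_zero]
    exact zero_mem S
  · rw [map_add]
    exact add_mem ha hb

variable {I g : Type*} [Add I] [LieRing g] [LieAlgebra R g] {T : I → g →ₗ[R] L}

theorem exists_lieHom_of_bijective_sum {L' : Type*} [LieRing L'] [LieAlgebra R L']
    (hTlie : ∀ k l x y, ⁅T k x, T l y⁆ = T (k + l) ⁅x, y⁆)
    (hT : Function.Bijective fun m : I →₀ g => m.sum fun k x => T k x)
    (f : I → g →ₗ[R] L') (hf : ∀ k l x y, ⁅f k x, f l y⁆ = f (k + l) ⁅x, y⁆) :
    ∃ F : L →ₗ⁅R⁆ L', ∀ k x, F (T k x) = f k x := by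
  obtain ⟨F, hF⟩ := exists_linearMap_of_bijective_sum hT f
  have map_lie (a b : L) : F ⁅a, b⁆ = ⁅F a, F b⁆ := by
    induction a using induction_of_surjective_sum hT.2 with
    | zero => simp only [zero_lie, map_zero]
    | add a c ha hc => rw [add_lie, map_add, ha, hc, map_add, add_lie]
    | map k x =>
      induction b using induction_of_surjective_sum hT.2 with
      | zero => simp only [lie_zero, map_zero]
      | add b c hb hc => rw [lie_add, map_add, hb, hc, map_add, lie_add]
      | map l y => rw [hTlie, hF, hF, hF, hf]
  exact ⟨{ F with map_lie' := fun {a b} => map_lie a b }, hF⟩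

theorem exists_algHom_of_bijective_sum {A : Type*} [Ring A] [Algebra R A]
    (hTlie : ∀ k l x y, ⁅T k x, T l y⁆ = T (k + l) ⁅x, y⁆)
    (hT : Function.Bijective fun m : I →₀ g => m.sum fun k x => T k x)
    (f : I → g →ₗ[R] A) (hf : ∀ k l x y, ⁅f k x, f l y⁆ = f (k + l) ⁅x, y⁆) :
    ∃ φ : UniversalEnvelopingAlgebra R L →ₐ[R] A, ∀ k x, φ (ι R (T k x)) = f k x := by
  obtain ⟨F, hF⟩ := exists_lieHom_of_bijective_sum hTlie hT f hf
  exact ⟨lift R F, fun k x => (lift_ι_apply R F _).trans (hF k x)⟩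

end EnvelopingAlgebra

section Filtration

open PowerSeries

variable {R A B : Type*} [CommRing R] [Ring A] [Algebra R A] [Ring B] [Algebra R B]

theorem coeff_add_mul_of_le_order {φ ψ : B⟦X⟧} {r s : ℕ} (hφ : r ≤ φ.order) (hψ : s ≤ ψ.order) :
    coeff (r + s) (φ * ψ) = coeff r φ * coeff s ψ := by
  rw [coeff_mul]
  refine Finset.sum_eq_single_of_mem (r, s) (by simp) fun p hp hne => ?_
  rw [Finset.HasAntidiagonal.mem_antidiagonal] at hp
  rcases lt_trichotomy p.1 r with h | h | h
  · rw [coeff_of_lt_order _ (lt_of_lt_of_le (by exact_mod_cast h) hφ), zero_mul]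
  · exact absurd (Prod.ext h (by lia)) hne
  · have hs : p.2 < s := by lia
    rw [coeff_of_lt_order _ (lt_of_lt_of_le (by exact_mod_cast hs) hψ), mul_zero]

variable (R B) in
/-- The `X`-adic filtration of `B⟦X⟧`, as a filtration by `R`-submodules. -/
def orderFiltration (r : ℕ) : Submodule R B⟦X⟧ where
  carrier := {φ | r ≤ φ.order}
  zero_mem' := by simp
  add_mem' {φ ψ} hφ hψ := (le_min hφ hψ).trans (min_order_le_order_add φ ψ)
  smul_mem' c φ hφ := by
    rw [← algebraMap_smul B c φ]
    exact hφ.trans le_order_smul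

@[simp]
theorem mem_orderFiltration {r : ℕ} {φ : B⟦X⟧} : φ ∈ orderFiltration R B r ↔ r ≤ φ.order :=
  Iff.rfl

instance : SetLike.GradedMonoid (orderFiltration R B) where
  one_mem := by simp
  mul_mem r s φ ψ hφ hψ := by
    rw [mem_orderFiltration] at hφ hψ ⊢
    push_cast
    exact (add_le_add hφ hψ).trans (le_order_mul φ ψ)

theorem orderFiltration_antitone : Antitone (orderFiltration R B) := fun _ _ h _ hφ =>
  (Nat.cast_le.2 h : _ ≤ _).trans (mem_orderFiltration.1 hφ)

theorem gradedMonoid_comap (F : ℕ → Submodule R B) [SetLike.GradedMonoid F] (ψ : A →ₐ[R] B) :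
    SetLike.GradedMonoid fun r => (F r).comap ψ.toLinearMap where
  one_mem := by simpa using SetLike.one_mem_graded F
  mul_mem r s a b ha hb := by
    simpa using SetLike.mul_mem_graded (A := F) ha hb

/-- The degree-zero part of a multiplicative filtration, as a subalgebra. -/
def zeroSubalgebra (F : ℕ → Submodule R A) [SetLike.GradedMonoid F] : Subalgebra R A :=
  (F 0).toSubalgebra (SetLike.one_mem_graded F) fun a b ha hb => by
    simpa using SetLike.mul_mem_graded ha hb

theorem mem_zeroSubalgebra {F : ℕ → Submodule R A} [SetLike.GradedMonoid F] {a : A} :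
    a ∈ zeroSubalgebra F ↔ a ∈ F 0 :=
  Iff.rfl

theorem mul_mem_left_of_zeroSubalgebra_eq_top {F : ℕ → Submodule R A} [SetLike.GradedMonoid F]
    (hF : zeroSubalgebra F = ⊤) {r : ℕ} (a : A) {b : A} (hb : b ∈ F r) : a * b ∈ F r := by
  simpa using SetLike.mul_mem_graded (mem_zeroSubalgebra.1 (hF ▸ Algebra.mem_top)) hb

theorem mul_mem_right_of_zeroSubalgebra_eq_top {F : ℕ → Submodule R A} [SetLike.GradedMonoid F]
    (hF : zeroSubalgebra F = ⊤) {r : ℕ} {a : A} (b : A) (ha : a ∈ F r) : a * b ∈ F r := by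
  simpa using SetLike.mul_mem_graded ha (mem_zeroSubalgebra.1 (hF ▸ Algebra.mem_top))

end Filtration

section AssociatedGraded

open PowerSeries

variable {R A G B : Type*} [CommRing R] [Ring A] [Algebra R A] [Ring G] [Algebra R G]
  [Ring B] [Algebra R B]

/-- `G` is the associated graded algebra `⊕ F r / F (r + 1)` of the decreasing filtration `F` of
`A`. The symbol maps `F r → F r / F (r + 1) ⊆ G` are given by linear maps `π r` on all of `A`,
whose values outside `F r` carry no information. -/
structure IsAssociatedGraded (F : ℕ → Submodule R A) (π : ℕ → A →ₗ[R] G) : Prop where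
  symbol_eq_zero_iff : ∀ r, ∀ a ∈ F r, π r a = 0 ↔ a ∈ F (r + 1)
  symbol_mul : ∀ r s a b, a ∈ F r → b ∈ F s → π r a * π s b = π (r + s) (a * b)
  symbol_one : π 0 1 = 1
  span_symbols : Submodule.span R (⋃ r, π r '' F r) = ⊤
  symbol_eq_zero_of_sum_eq_zero : ∀ m : ℕ →₀ A, (∀ r, m r ∈ F r) →
    (m.sum fun r a => π r a) = 0 → ∀ r, π r (m r) = 0

namespace IsAssociatedGraded

variable {F : ℕ → Submodule R A} {π : ℕ → A →ₗ[R] G}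

theorem surjective_lsum_symbol (hG : IsAssociatedGraded F π) :
    Function.Surjective ((lsum R π).domRestrict (Finsupp.submodule F)) := by
  rw [← LinearMap.range_eq_top, eq_top_iff, ← hG.span_symbols, Submodule.span_le]
  refine Set.iUnion_subset fun r => ?_
  rintro _ ⟨a, ha, rfl⟩
  exact ⟨⟨single r a, single_mem_submodule ha⟩, lsum_single R π r a⟩

theorem exists_linearMap (hG : IsAssociatedGraded F π) {M : Type*} [AddCommGroup M] [Module R M]
    (σ : ℕ → A →ₗ[R] M) (hσ : ∀ r, ∀ a ∈ F (r + 1), σ r a = 0) :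
    ∃ Ψ : G →ₗ[R] M, ∀ r, ∀ a ∈ F r, Ψ (π r a) = σ r a := by
  let p : Finsupp.submodule F →ₗ[R] G := (lsum R π).domRestrict (Finsupp.submodule F)
  let q : Finsupp.submodule F →ₗ[R] M := (lsum R σ).domRestrict (Finsupp.submodule F)
  have hpq : LinearMap.ker p ≤ LinearMap.ker q := by
    intro m hm
    rw [LinearMap.mem_ker, LinearMap.domRestrict_apply, lsum_apply] at hm ⊢
    exact Finset.sum_eq_zero fun r _ => hσ r _ <| (hG.symbol_eq_zero_iff r _ (m.2 r)).1 <|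
      hG.symbol_eq_zero_of_sum_eq_zero m m.2 hm r
  obtain ⟨Ψ, hΨ⟩ := exists_linearMap_comp_eq_of_ker_le (V := Finsupp.submodule F) p q
    hG.surjective_lsum_symbol hpq
  refine ⟨Ψ, fun r a ha => ?_⟩
  have hra := LinearMap.congr_fun hΨ ⟨single r a, single_mem_submodule ha⟩
  simpa only [p, q, LinearMap.comp_apply, LinearMap.domRestrict_apply, lsum_single] using hra

theorem exists_algHom [SetLike.GradedMonoid F] (hG : IsAssociatedGraded F π)
    (σ : ℕ → A →ₗ[R] B) (hσ : ∀ r, ∀ a ∈ F (r + 1), σ r a = 0) (hσ_one : σ 0 1 = 1)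
    (hσ_mul : ∀ r s a b, a ∈ F r → b ∈ F s → σ (r + s) (a * b) = σ r a * σ s b) :
    ∃ Ψ : G →ₐ[R] B, ∀ r, ∀ a ∈ F r, Ψ (π r a) = σ r a := by
  obtain ⟨Ψ, hΨ⟩ := hG.exists_linearMap σ hσ
  have map_one : Ψ 1 = 1 := by
    rw [← hG.symbol_one, hΨ 0 1 (SetLike.one_mem_graded F), hσ_one]
  have map_mul : ∀ x y, Ψ (x * y) = Ψ x * Ψ y := by
    refine Ψ.map_mul_iff.2 <| LinearMap.ext_on hG.span_symbols fun x hx =>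
      LinearMap.ext_on hG.span_symbols fun y hy => ?_
    obtain ⟨r, a, ha, rfl⟩ := Set.mem_iUnion.1 hx
    obtain ⟨s, b, hb, rfl⟩ := Set.mem_iUnion.1 hy
    change Ψ (π r a * π s b) = Ψ (π r a) * Ψ (π s b)
    rw [hG.symbol_mul r s a b ha hb, hΨ _ _ (SetLike.mul_mem_graded ha hb), hσ_mul r s a b ha hb,
      hΨ r a ha, hΨ s b hb]
  exact ⟨AlgHom.ofLinearMap Ψ map_one map_mul, hΨ⟩

theorem exists_leadingCoeff_algHom [SetLike.GradedMonoid F] (hG : IsAssociatedGraded F π)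
    (ψ : A →ₐ[R] B⟦X⟧) (hψ : ∀ r, F r ≤ (orderFiltration R B r).comap ψ.toLinearMap) :
    ∃ Ψ : G →ₐ[R] B, ∀ r, ∀ a ∈ F r, Ψ (π r a) = coeff r (ψ a) := by
  refine hG.exists_algHom (fun r => (coeff r).restrictScalars R ∘ₗ ψ.toLinearMap)
    (fun r a ha => ?_) ?_ (fun r s a b ha hb => ?_)
  · exact coeff_of_lt_order r ((Nat.cast_lt.2 r.lt_succ_self).trans_le (hψ _ ha))
  · simp
  · simpa using coeff_add_mul_of_le_order (hψ r ha) (hψ s hb)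

/-- The elements of `F r` whose symbol lies in the subalgebra `S` of the associated graded
algebra. -/
def symbolPreimage (F : ℕ → Submodule R A) (π : ℕ → A →ₗ[R] G) (S : Subalgebra R G) (r : ℕ) :
    Submodule R A :=
  F r ⊓ S.toSubmodule.comap (π r)

theorem gradedMonoid_symbolPreimage [SetLike.GradedMonoid F] (hG : IsAssociatedGraded F π)
    (S : Subalgebra R G) : SetLike.GradedMonoid (symbolPreimage F π S) where
  one_mem := ⟨SetLike.one_mem_graded F, show π 0 1 ∈ S from hG.symbol_one ▸ one_mem S⟩
  mul_mem r s a b ha hb := ⟨SetLike.mul_mem_graded ha.1 hb.1,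
    show π (r + s) (a * b) ∈ S from hG.symbol_mul r s a b ha.1 hb.1 ▸ mul_mem ha.2 hb.2⟩

theorem symbolPreimage_antitone (hG : IsAssociatedGraded F π) (hF : Antitone F)
    (S : Subalgebra R G) : Antitone (symbolPreimage F π S) := by
  refine antitone_nat_of_succ_le fun r a ha => ?_
  have haF : a ∈ F r := hF r.le_succ ha.1
  exact ⟨haF, show π r a ∈ S from (hG.symbol_eq_zero_iff r a haF).2 ha.1 ▸ zero_mem S⟩

theorem eq_top_of_le_symbolPreimage (hG : IsAssociatedGraded F π) {S : Subalgebra R G}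
    (h : ∀ r, F r ≤ symbolPreimage F π S r) : S = ⊤ := by
  rw [← Algebra.toSubmodule_eq_top, eq_top_iff, ← hG.span_symbols, Submodule.span_le]
  refine Set.iUnion_subset fun r => ?_
  rintro _ ⟨a, ha, rfl⟩
  exact (h r ha).2

end IsAssociatedGraded

end AssociatedGraded

section DifferenceElements

variable {g L : Type*}

section Module

variable [AddCommGroup g] [Module ℂ g] [AddCommGroup L] [Module ℂ L] (T : ℤ → g →ₗ[ℂ] L)

/-- `xrk T r k` as a linear map in `x : g`. -/
def xrkLinearMap (r : ℕ) (k : ℤ) : g →ₗ[ℂ] L where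
  toFun := xrk T r k
  map_add' x y := by simp [xrk, Finset.sum_add_distrib]
  map_smul' c x := by
    simp only [xrk, map_smul, Finset.smul_sum, RingHom.id_apply]
    exact Finset.sum_congr rfl fun s _ => smul_comm _ _ _

theorem xrk_eq_fwdDiff_iter (r : ℕ) (k : ℤ) (x : g) :
    xrk T r k x = (fwdDiff (1 : ℤ))^[r] (fun j => T j x) k := by
  rw [fwdDiff_iter_eq_sum_shift]
  simp [xrk, add_comm]

theorem xrk_zero (k : ℤ) (x : g) : xrk T 0 k x = T k x := by
  rw [xrk_eq_fwdDiff_iter, Function.iterate_zero_apply]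

theorem xrk_succ (r : ℕ) (k : ℤ) (x : g) :
    xrk T (r + 1) k x = xrk T r (k + 1) x - xrk T r k x := by
  simp only [xrk_eq_fwdDiff_iter, Function.iterate_succ_apply', fwdDiff]

end Module

theorem lie_xrk_xrk [LieRing g] [LieAlgebra ℂ g] [LieRing L] [LieAlgebra ℂ L]
    {T : ℤ → g →ₗ[ℂ] L} (hTlie : ∀ k l x y, ⁅T k x, T l y⁆ = T (k + l) ⁅x, y⁆)
    (r s : ℕ) (k l : ℤ) (x y : g) :
    ⁅xrk T r k x, xrk T s l y⁆ = xrk T (r + s) (k + l) ⁅x, y⁆ := by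
  induction r generalizing k with
  | zero =>
    induction s generalizing l with
    | zero => simp only [add_zero, xrk_zero, hTlie]
    | succ s ih => rw [xrk_succ, lie_sub, ih, ih, ← add_assoc, ← add_assoc, ← xrk_succ]
  | succ r ih =>
    rw [xrk_succ, sub_lie, ih, ih, add_right_comm k 1 l, ← xrk_succ, add_right_comm r s 1]

end DifferenceElements

section KappaFiltration

open UniversalEnvelopingAlgebra (ι)

variable {g L : Type*} [AddCommGroup g] [Module ℂ g] [LieRing L] [LieAlgebra ℂ L]

/-- The products `(x₁)_{r₁,k₁} ⋯ (x_a)_{r_a,k_a}` with `r₁ + ⋯ + r_a ≥ r`, which generate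
`κ_r`. -/
def xrkMonomials (T : ℤ → g →ₗ[ℂ] L) (r : ℕ) : Set (UniversalEnvelopingAlgebra ℂ L) :=
  {u | ∃ (a : ℕ) (xs : Fin a → g) (rs : Fin a → ℕ) (ks : Fin a → ℤ), r ≤ ∑ i, rs i ∧
    u = (List.ofFn fun i => ι ℂ (xrk T (rs i) (ks i) (xs i))).prod}

/-- The ideals `κ_r` as a filtration by subspaces. -/
def kappaFiltration (T : ℤ → g →ₗ[ℂ] L) (r : ℕ) : Submodule ℂ (UniversalEnvelopingAlgebra ℂ L) :=
  (kappa T r).asIdeal.restrictScalars ℂ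

/-- The linear span of the products of total degree at least `r`. It turns out to be `κ_r`, but
unlike for `κ_r` its multiplicativity is visible from the definition. -/
def monomialFiltration (T : ℤ → g →ₗ[ℂ] L) (r : ℕ) :
    Submodule ℂ (UniversalEnvelopingAlgebra ℂ L) :=
  Submodule.span ℂ (xrkMonomials T r)

variable {T : ℤ → g →ₗ[ℂ] L}

theorem mem_kappaFiltration {r : ℕ} {u : UniversalEnvelopingAlgebra ℂ L} :
    u ∈ kappaFiltration T r ↔ u ∈ kappa T r :=
  TwoSidedIdeal.mem_asIdeal

theorem one_mem_xrkMonomials : 1 ∈ xrkMonomials T 0 :=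
  ⟨0, Fin.elim0, Fin.elim0, Fin.elim0, Nat.zero_le _, by simp⟩

theorem ι_xrk_mem_xrkMonomials (r : ℕ) (k : ℤ) (x : g) :
    ι ℂ (xrk T r k x) ∈ xrkMonomials T r :=
  ⟨1, fun _ => x, fun _ => r, fun _ => k, by simp, by simp⟩

theorem mul_mem_xrkMonomials {r s : ℕ} {u v : UniversalEnvelopingAlgebra ℂ L}
    (hu : u ∈ xrkMonomials T r) (hv : v ∈ xrkMonomials T s) : u * v ∈ xrkMonomials T (r + s) := by
  obtain ⟨a, xs, rs, ks, hr, rfl⟩ := hu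
  obtain ⟨b, ys, ss, ls, hs, rfl⟩ := hv
  refine ⟨a + b, Fin.append xs ys, Fin.append rs ss, Fin.append ks ls, ?_, ?_⟩
  · simpa [Fin.sum_univ_add] using add_le_add hr hs
  · rw [← List.prod_append, ← List.ofFn_fin_append]
    congr 2
    funext i
    induction i using Fin.addCases <;> simp

theorem xrkMonomials_antitone : Antitone (xrkMonomials T) := by
  rintro r s hrs _ ⟨a, xs, rs, ks, hs, rfl⟩
  exact ⟨a, xs, rs, ks, hrs.trans hs, rfl⟩

theorem xrkMonomials_subset_kappaFiltration (r : ℕ) :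
    xrkMonomials T r ⊆ kappaFiltration T r :=
  TwoSidedIdeal.subset_span

theorem kappaFiltration_antitone : Antitone (kappaFiltration T) := fun _ _ hrs =>
  TwoSidedIdeal.span_mono (xrkMonomials_antitone hrs)

theorem ι_xrk_mem_kappaFiltration (r : ℕ) (k : ℤ) (x : g) :
    ι ℂ (xrk T r k x) ∈ kappaFiltration T r :=
  xrkMonomials_subset_kappaFiltration r (ι_xrk_mem_xrkMonomials r k x)

instance : SetLike.GradedMonoid (monomialFiltration T) where
  one_mem := Submodule.subset_span one_mem_xrkMonomials
  mul_mem r s u v hu hv := by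
    have huv := Submodule.mul_mem_mul hu hv
    rw [monomialFiltration, monomialFiltration, Submodule.span_mul_span] at huv
    exact Submodule.span_mono (Set.mul_subset_iff.2 fun _ ha _ hb => mul_mem_xrkMonomials ha hb) huv

theorem kappaFiltration_le (hT : Function.Surjective fun m : ℤ →₀ g => m.sum fun k x => T k x)
    (F : ℕ → Submodule ℂ (UniversalEnvelopingAlgebra ℂ L)) [SetLike.GradedMonoid F]
    (hF : Antitone F) (hx : ∀ r k x, ι ℂ (xrk T r k x) ∈ F r) (r : ℕ) :
    kappaFiltration T r ≤ F r := by
  have hF_zero : zeroSubalgebra F = ⊤ := subalgebra_eq_top_of_forall_ι_apply_mem hT fun k x => by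
    simpa only [xrk_zero, mem_zeroSubalgebra] using hx 0 k x
  intro u hu
  rw [mem_kappaFiltration] at hu
  induction hu using TwoSidedIdeal.span_induction with
  | mem u hu =>
    obtain ⟨a, xs, rs, ks, hr, rfl⟩ := hu
    refine hF hr ?_
    rw [← List.sum_ofFn]
    exact SetLike.list_prod_ofFn_mem_graded rs _ fun i => hx (rs i) (ks i) (xs i)
  | zero => exact zero_mem _
  | add u v _ _ hu hv => exact add_mem hu hv
  | neg u _ hu => exact neg_mem hu
  | left_absorb a u _ hu => exact mul_mem_left_of_zeroSubalgebra_eq_top hF_zero a hu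
  | right_absorb a u _ hu => exact mul_mem_right_of_zeroSubalgebra_eq_top hF_zero a hu

theorem kappaFiltration_eq_monomialFiltration
    (hT : Function.Surjective fun m : ℤ →₀ g => m.sum fun k x => T k x) :
    kappaFiltration T = monomialFiltration T := by
  ext1 r
  refine le_antisymm (kappaFiltration_le hT _ ?_ ?_ r) ?_
  · exact fun _ _ hrs => Submodule.span_mono (xrkMonomials_antitone hrs)
  · exact fun r k x => Submodule.subset_span (ι_xrk_mem_xrkMonomials r k x)
  · exact Submodule.span_le.2 (xrkMonomials_subset_kappaFiltration r)

theorem gradedMonoid_kappaFiltration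
    (hT : Function.Surjective fun m : ℤ →₀ g => m.sum fun k x => T k x) :
    SetLike.GradedMonoid (kappaFiltration T) := by
  rw [kappaFiltration_eq_monomialFiltration hT]
  infer_instance

section Symbols

variable {G : Type*} [Ring G] [Algebra ℂ G] {π : ℕ → UniversalEnvelopingAlgebra ℂ L →ₗ[ℂ] G}

theorem symbol_ι_xrk_eq (hG : IsAssociatedGraded (kappaFiltration T) π) (r : ℕ) (k : ℤ) (x : g) :
    π r (ι ℂ (xrk T r k x)) = π r (ι ℂ (xrk T r 0 x)) := by
  have hstep (k : ℤ) : π r (ι ℂ (xrk T r (k + 1) x)) = π r (ι ℂ (xrk T r k x)) := by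
    have hdiff : ι ℂ (xrk T (r + 1) k x) ∈ kappaFiltration T (r + 1) :=
      ι_xrk_mem_kappaFiltration (r + 1) k x
    rw [← sub_eq_zero, ← map_sub, ← map_sub, ← xrk_succ]
    exact (hG.symbol_eq_zero_iff r _ (kappaFiltration_antitone r.le_succ hdiff)).2 hdiff
  induction k using Int.induction_on with
  | zero => rfl
  | succ k ih => rw [hstep, ih]
  | pred k ih => rw [← ih, ← hstep, sub_add_cancel]

theorem subalgebra_eq_top_of_forall_symbol_mem
    (hT : Function.Surjective fun m : ℤ →₀ g => m.sum fun k x => T k x)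
    (hG : IsAssociatedGraded (kappaFiltration T) π) {S : Subalgebra ℂ G}
    (hS : ∀ r x, π r (ι ℂ (xrk T r 0 x)) ∈ S) : S = ⊤ := by
  have := gradedMonoid_kappaFiltration hT
  have := hG.gradedMonoid_symbolPreimage S
  refine hG.eq_top_of_le_symbolPreimage <| kappaFiltration_le hT _
    (hG.symbolPreimage_antitone kappaFiltration_antitone S) fun r k x => ?_
  exact ⟨ι_xrk_mem_kappaFiltration r k x,
    show π r _ ∈ S from symbol_ι_xrk_eq hG r k x ▸ hS r x⟩

end Symbols

end KappaFiltration

section CurrentSeries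

attribute [local instance] LieRing.ofAssociativeRing

open PowerSeries

open UniversalEnvelopingAlgebra (ι)

variable {R g Cu : Type*} [CommRing R] [LieRing Cu] [LieAlgebra R Cu]

section Module

variable [AddCommGroup g] [Module R g]

/-- The element `x p(u)` of the completed current algebra, for a power series `p`, written as the
series `∑ₙ pₙ (x uⁿ) Xⁿ` over `U(g[u])`, where `X` records the degree in `u`. -/
def currentSeries (P : ℕ → g →ₗ[R] Cu) (p : R⟦X⟧) :
    g →ₗ[R] (UniversalEnvelopingAlgebra R Cu)⟦X⟧ where
  toFun x := PowerSeries.mk fun n => coeff n p • ι R (P n x)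
  map_add' x y := by ext n; simp
  map_smul' c x := by
    ext n
    rw [RingHom.id_apply, LinearMap.map_smul_of_tower, coeff_mk, coeff_mk, map_smul, map_smul,
      smul_comm]

theorem coeff_currentSeries (P : ℕ → g →ₗ[R] Cu) (p : R⟦X⟧) (n : ℕ) (x : g) :
    coeff n (currentSeries P p x) = coeff n p • ι R (P n x) :=
  coeff_mk n fun n => coeff n p • ι R (P n x)

theorem currentSeries_sub (P : ℕ → g →ₗ[R] Cu) (p q : R⟦X⟧) (x : g) :
    currentSeries P (p - q) x = currentSeries P p x - currentSeries P q x := by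
  ext n
  simp only [coeff_currentSeries, map_sub, sub_smul]

theorem order_le_order_currentSeries (P : ℕ → g →ₗ[R] Cu) (p : R⟦X⟧) (x : g) :
    p.order ≤ (currentSeries P p x).order :=
  le_order _ _ fun n hn => by rw [coeff_currentSeries, coeff_of_lt_order n hn, zero_smul]

end Module

theorem lie_currentSeries [LieRing g] [LieAlgebra R g] {P : ℕ → g →ₗ[R] Cu}
    (hPlie : ∀ k l x y, ⁅P k x, P l y⁆ = P (k + l) ⁅x, y⁆) (p q : R⟦X⟧) (x y : g) :
    ⁅currentSeries P p x, currentSeries P q y⁆ = currentSeries P (p * q) ⁅x, y⁆ := by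
  ext n
  have lie_coeff : ∀ d ∈ Finset.HasAntidiagonal.antidiagonal n,
      coeff d.1 (currentSeries P p x) * coeff d.2 (currentSeries P q y) -
        coeff d.2 (currentSeries P q y) * coeff d.1 (currentSeries P p x) =
      (coeff d.1 p * coeff d.2 q) • ι R (P n ⁅x, y⁆) := by
    intro d hd
    simp only [coeff_currentSeries, smul_mul_smul_comm]
    rw [mul_comm (coeff d.2 q), ← smul_sub, ← LieRing.of_associative_ring_bracket, ← LieHom.map_lie,
      hPlie, Finset.HasAntidiagonal.mem_antidiagonal.1 hd]
  rw [LieRing.of_associative_ring_bracket, map_sub, coeff_mul, coeff_mul,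
    ← Finset.Nat.sum_antidiagonal_swap (n := n) (f := fun d =>
      coeff d.1 (currentSeries P q y) * coeff d.2 (currentSeries P p x)),
    ← Finset.sum_sub_distrib, coeff_currentSeries, coeff_mul, Finset.sum_smul]
  exact Finset.sum_congr rfl lie_coeff

end CurrentSeries

section Comparison

attribute [local instance] LieRing.ofAssociativeRing

open PowerSeries

open UniversalEnvelopingAlgebra (ι)

variable {g L Cu G : Type*} [LieRing g] [LieAlgebra ℂ g] [LieRing L] [LieAlgebra ℂ L]
  [LieRing Cu] [LieAlgebra ℂ Cu] [Ring G] [Algebra ℂ G] {T : ℤ → g →ₗ[ℂ] L}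
  {P : ℕ → g →ₗ[ℂ] Cu} {π : ℕ → UniversalEnvelopingAlgebra ℂ L →ₗ[ℂ] G}

theorem exists_expansion_algHom (hTlie : ∀ k l x y, ⁅T k x, T l y⁆ = T (k + l) ⁅x, y⁆)
    (hT : Function.Bijective fun m : ℤ →₀ g => m.sum fun k x => T k x)
    (hPlie : ∀ k l x y, ⁅P k x, P l y⁆ = P (k + l) ⁅x, y⁆) :
    ∃ ψ : UniversalEnvelopingAlgebra ℂ L →ₐ[ℂ] (UniversalEnvelopingAlgebra ℂ Cu)⟦X⟧,
      ∀ r k x, ψ (ι ℂ (xrk T r k x)) = currentSeries P (X ^ r * binomialSeries ℂ k) x := by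
  obtain ⟨ψ, hψ⟩ := exists_algHom_of_bijective_sum hTlie hT
    (fun k => currentSeries P (binomialSeries ℂ k)) fun k l x y => by
      rw [lie_currentSeries hPlie, binomialSeries_add]
  refine ⟨ψ, fun r => ?_⟩
  induction r with
  | zero => intro k x; rw [xrk_zero, hψ, pow_zero, one_mul]
  | succ r ih =>
    intro k x
    have binomialSeries_one : binomialSeries ℂ (1 : ℤ) = 1 + X := by
      simpa using binomialSeries_nat (R := ℤ) (A := ℂ) 1
    rw [xrk_succ, map_sub, map_sub, ih, ih, ← currentSeries_sub, binomialSeries_add,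
      binomialSeries_one]
    congr 1
    ring_nf

theorem exists_algHom_ι_eq_symbol (hTlie : ∀ k l x y, ⁅T k x, T l y⁆ = T (k + l) ⁅x, y⁆)
    (hPlie : ∀ k l x y, ⁅P k x, P l y⁆ = P (k + l) ⁅x, y⁆)
    (hP : Function.Bijective fun m : ℕ →₀ g => m.sum fun k x => P k x)
    (hG : IsAssociatedGraded (kappaFiltration T) π) :
    ∃ Φ : UniversalEnvelopingAlgebra ℂ Cu →ₐ[ℂ] G,
      ∀ r x, Φ (ι ℂ (P r x)) = π r (ι ℂ (xrk T r 0 x)) := by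
  refine exists_algHom_of_bijective_sum hPlie hP
    (fun r => π r ∘ₗ (ι ℂ).toLinearMap ∘ₗ xrkLinearMap T r 0) fun r s x y => ?_
  change ⁅π r (ι ℂ (xrk T r 0 x)), π s (ι ℂ (xrk T s 0 y))⁆ =
    π (r + s) (ι ℂ (xrk T (r + s) 0 ⁅x, y⁆))
  have hx := ι_xrk_mem_kappaFiltration (T := T) r 0 x
  have hy := ι_xrk_mem_kappaFiltration (T := T) s 0 y
  rw [LieRing.of_associative_ring_bracket, hG.symbol_mul r s _ _ hx hy,
    hG.symbol_mul s r _ _ hy hx, add_comm s r, ← map_sub, ← LieRing.of_associative_ring_bracket,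
    ← LieHom.map_lie, lie_xrk_xrk hTlie, add_zero]

theorem exists_algHom_symbol_eq_ι (hTlie : ∀ k l x y, ⁅T k x, T l y⁆ = T (k + l) ⁅x, y⁆)
    (hT : Function.Bijective fun m : ℤ →₀ g => m.sum fun k x => T k x)
    (hPlie : ∀ k l x y, ⁅P k x, P l y⁆ = P (k + l) ⁅x, y⁆)
    (hG : IsAssociatedGraded (kappaFiltration T) π) :
    ∃ Ψ : G →ₐ[ℂ] UniversalEnvelopingAlgebra ℂ Cu,
      ∀ r x, Ψ (π r (ι ℂ (xrk T r 0 x))) = ι ℂ (P r x) := by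
  obtain ⟨ψ, hψ⟩ := exists_expansion_algHom hTlie hT hPlie
  have := gradedMonoid_kappaFiltration hT.2
  have := gradedMonoid_comap (orderFiltration ℂ (UniversalEnvelopingAlgebra ℂ Cu)) ψ
  have hψ_order := kappaFiltration_le hT.2
    (fun r => (orderFiltration ℂ (UniversalEnvelopingAlgebra ℂ Cu) r).comap ψ.toLinearMap)
    (fun _ _ hrs => Submodule.comap_mono (orderFiltration_antitone hrs)) fun r k x => by
      rw [Submodule.mem_comap, AlgHom.toLinearMap_apply, hψ, mem_orderFiltration]
      refine le_trans ?_ (order_le_order_currentSeries P _ x)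
      exact le_trans (by simp) (le_order_mul _ _)
  obtain ⟨Ψ, hΨ⟩ := hG.exists_leadingCoeff_algHom ψ hψ_order
  refine ⟨Ψ, fun r x => ?_⟩
  rw [hΨ r _ (ι_xrk_mem_kappaFiltration r 0 x), hψ, binomialSeries_zero, mul_one,
    coeff_currentSeries, coeff_X_pow_self, one_smul]

theorem stmt0_general (hTlie : ∀ k l x y, ⁅T k x, T l y⁆ = T (k + l) ⁅x, y⁆)
    (hT : Function.Bijective fun m : ℤ →₀ g => m.sum fun k x => T k x)
    (hPlie : ∀ k l x y, ⁅P k x, P l y⁆ = P (k + l) ⁅x, y⁆)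
    (hP : Function.Bijective fun m : ℕ →₀ g => m.sum fun k x => P k x)
    (hG : IsAssociatedGraded (kappaFiltration T) π) :
    ∃ Φ : UniversalEnvelopingAlgebra ℂ Cu ≃ₐ[ℂ] G,
      ∀ x r, Φ (ι ℂ (P r x)) = π r (ι ℂ (xrk T r 0 x)) := by
  obtain ⟨Φ, hΦ⟩ := exists_algHom_ι_eq_symbol hTlie hPlie hP hG
  obtain ⟨Ψ, hΨ⟩ := exists_algHom_symbol_eq_ι hTlie hT hPlie hG
  have hΦΨ : Φ.comp Ψ = AlgHom.id ℂ G := by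
    rw [← AlgHom.equalizer_eq_top]
    refine subalgebra_eq_top_of_forall_symbol_mem hT.2 hG fun r x => ?_
    rw [AlgHom.mem_equalizer, AlgHom.comp_apply, hΨ, hΦ, AlgHom.id_apply]
  have hΨΦ : Ψ.comp Φ = AlgHom.id ℂ (UniversalEnvelopingAlgebra ℂ Cu) := by
    rw [← AlgHom.equalizer_eq_top]
    refine subalgebra_eq_top_of_forall_ι_apply_mem hP.2 fun r x => ?_
    rw [AlgHom.mem_equalizer, AlgHom.comp_apply, hΦ, hΨ, AlgHom.id_apply]
  exact ⟨AlgEquiv.ofAlgHom Φ Ψ hΦΨ hΨΦ, fun x r => hΦ r x⟩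

end Comparison

/-- Proposition 2.1 of the paper.
Let `g` be a finite-dimensional complex simple Lie algebra, `L = g[t,t⁻¹]` its loop algebra
and `Cu = g[u]` its current algebra (both abstractly characterized via their structure
maps).  Let `G` be the associated graded algebra `Gr_κ g[t,t⁻¹] = ⊕_{r≥0} κ_r/κ_{r+1}` of
`U(g[t,t⁻¹])` with respect to the filtration `(κ_r)` (abstractly characterized via the
symbol maps `π r : κ_r → G`).  Then there is an algebra isomorphism
`Φ : U(g[u]) ≅ Gr_κ g[t,t⁻¹]` sending `x u^r ↦ x̄_{r,0}` for all `x ∈ g`, `r ≥ 0`. -/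
theorem stmt0 {g : Type*} [LieRing g] [LieAlgebra ℂ g]
    [LieAlgebra.IsSimple ℂ g] [Module.Finite ℂ g]
    -- the loop algebra g[t,t⁻¹], abstractly characterized
    {L : Type*} [LieRing L] [LieAlgebra ℂ L]
    (T : ℤ → g →ₗ[ℂ] L)
    (hTbrk : ∀ (k l : ℤ) (x y : g), ⁅T k x, T l y⁆ = T (k + l) ⁅x, y⁆)
    (hTbij : Function.Bijective fun m : ℤ →₀ g => m.sum fun k x => T k x)
    -- the current algebra g[u], abstractly characterized
    {Cu : Type*} [LieRing Cu] [LieAlgebra ℂ Cu]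
    (P : ℕ → g →ₗ[ℂ] Cu)
    (hPbrk : ∀ (k l : ℕ) (x y : g), ⁅P k x, P l y⁆ = P (k + l) ⁅x, y⁆)
    (hPbij : Function.Bijective fun m : ℕ →₀ g => m.sum fun k x => P k x)
    -- the associated graded algebra of U(g[t,t⁻¹]) w.r.t. the filtration κ,
    -- abstractly characterized by the symbol maps π r : κ r → G
    {G : Type*} [Ring G] [Algebra ℂ G]
    (π : ℕ → UniversalEnvelopingAlgebra ℂ L →ₗ[ℂ] G)
    (hπker : ∀ (r : ℕ) (x), x ∈ kappa T r → (π r x = 0 ↔ x ∈ kappa T (r + 1)))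
    (hπmul : ∀ (r s : ℕ) (x y), x ∈ kappa T r → y ∈ kappa T s →
      π r x * π s y = π (r + s) (x * y))
    (hπone : π 0 1 = 1)
    (hπspan : Submodule.span ℂ (⋃ r : ℕ, π r '' {x | x ∈ kappa T r}) = ⊤)
    (hπind : ∀ F : ℕ →₀ UniversalEnvelopingAlgebra ℂ L, (∀ r, F r ∈ kappa T r) →
      (F.sum fun r x => π r x) = 0 → ∀ r, π r (F r) = 0) :
    ∃ Φ : UniversalEnvelopingAlgebra ℂ Cu ≃ₐ[ℂ] G,
      ∀ (x : g) (r : ℕ),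
        Φ (UniversalEnvelopingAlgebra.ι ℂ (P r x))
          = π r (UniversalEnvelopingAlgebra.ι ℂ (xrk T r 0 x)) :=
  stmt0_general hTbrk hTbij hPbrk hPbij ⟨hπker, hπmul, hπone, hπspan, hπind⟩
end
end

section
/- Let A be an associative ℂ[ħ]-algebra, d_i a positive integer, and let b_{i,r} (r∈ℕ) and h_{i,s} (s∈ℕ) be elements of A with h_{i,s}=0 whenever s is even. Then the following two families of relations are equivalent: (i) [b_{i,s},b_{i,r+1}]−[b_{i,s+1},b_{i,r}]+ħ d_i (b_{i,r}b_{i,s}+b_{i,s}b_{i,r}) = 2(−1)^s h_{i,r+s+1} for all r,s∈ℕ; (ii) [b_{i,s},b_{i,r+1}] = −ħ d_i Σ_{t=0}^{r−s} b_{i,r−t}b_{i,s+t} + (−1)^s h_{i,r+s+1} for all s≤r in ℕ. -/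
open Polynomial Finset

/-!
Move everything in each relation to one side: let `E s r` be the defect of the first relation and
`D s r` that of the second. For `s + 2 ≤ r` one has `E s r = D s r - D (s + 1) (r - 1)`, because
passing from `(s, r)` to `(s + 1, r - 1)` removes exactly the two extreme terms of the sum and
changes the sign of the `h`-term. Moving inward, the antidiagonal ends at `E s s = 2 D s s` or at
`E s (s + 1) = D s (s + 1)`, so the values of `E` on `s ≤ r` determine those of `D` as soon as `2`
can be cancelled. As `h` vanishes at even indices, `E` is symmetric, and its values on `s ≤ r` are
all of them.
-/

theorem sum_range_add_two_sub {M : Type*} [AddCommMonoid M] (f : ℕ → ℕ → M) {s r : ℕ}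
    (hsr : s ≤ r) :
    ∑ t ∈ range (r + 2 - s + 1), f (r + 2 - t) (s + t) =
      f (r + 2) s + f s (r + 2) +
        ∑ t ∈ range (r + 1 - (s + 1) + 1), f (r + 1 - t) (s + 1 + t) := by
  obtain ⟨k, rfl⟩ := Nat.exists_eq_add_of_le hsr
  have hlong : s + k + 2 - s + 1 = k + 1 + 1 + 1 := by lia
  have hshort : s + k + 1 - (s + 1) + 1 = k + 1 := by lia
  have hinner (t : ℕ) :
      f (s + k + 2 - (t + 1)) (s + (t + 1)) = f (s + k + 1 - t) (s + 1 + t) := by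
    congr 1 <;> lia
  have hlast : f (s + k + 1 - (k + 1)) (s + 1 + (k + 1)) = f s (s + k + 2) := by
    congr 1 <;> lia
  rw [hlong, hshort, sum_range_succ']
  simp only [hinner]
  rw [sum_range_succ, hlast, Nat.sub_zero, Nat.add_zero]
  abel

theorem neg_one_pow_smul_eq_of_even_eq_zero {R M : Type*} [Ring R] [AddCommMonoid M]
    [Module R M] {h : ℕ → M} (hEven : ∀ n, Even n → h n = 0) (s r : ℕ) :
    (-1 : R) ^ s • h (r + s + 1) = (-1 : R) ^ r • h (r + s + 1) := by
  rcases Nat.even_or_odd (r + s) with hrs | hrs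
  · rw [neg_one_pow_congr (Nat.even_add.mp hrs).symm]
  · rw [hEven _ hrs.add_one, smul_zero, smul_zero]

section Defects

variable {R A : Type*} [CommRing R] [NonUnitalNonAssocRing A] [Module R A]

/-- The left side minus the right side of the cross relation
`[b s, b (r + 1)] - [b (s + 1), b r] + c (b r b s + b s b r) = 2 (-1) ^ s h (r + s + 1)`.
The scalar `c` plays the part of `ħ d`. -/
def crossDefect (c : R) (b h : ℕ → A) (s r : ℕ) : A :=
  ⁅b s, b (r + 1)⁆ - ⁅b (s + 1), b r⁆ + c • (b r * b s + b s * b r)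
    - (2 * (-1 : R) ^ s) • h (r + s + 1)

/-- The left side minus the right side of the formula
`[b s, b (r + 1)] = -c ∑ t ≤ r - s, b (r - t) b (s + t) + (-1) ^ s h (r + s + 1)`, with the scalar
`c` in the part of `ħ d`. It is meant for `s ≤ r`: otherwise `r - s` is `0` and the sum still has
the term `t = 0`. -/
def commutatorDefect (c : R) (b h : ℕ → A) (s r : ℕ) : A :=
  ⁅b s, b (r + 1)⁆
    - (-(c • ∑ t ∈ range (r - s + 1), b (r - t) * b (s + t)) + (-1 : R) ^ s • h (r + s + 1))

variable (c : R) (b h : ℕ → A)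

theorem crossDefect_self (s : ℕ) :
    crossDefect c b h s s = (2 : R) • commutatorDefect c b h s s := by
  simp only [crossDefect, commutatorDefect, Nat.sub_self, zero_add, sum_range_one, Nat.sub_zero,
    Nat.add_zero, Ring.lie_def]
  module

theorem crossDefect_self_succ (hEven : ∀ n, Even n → h n = 0) (s : ℕ) :
    crossDefect c b h s (s + 1) = commutatorDefect c b h s (s + 1) := by
  have h_zero : h (s + 1 + s + 1) = 0 := hEven _ ⟨s + 1, by ring⟩
  simp only [crossDefect, commutatorDefect, Nat.add_sub_cancel_left, sum_range_succ,
    sum_range_zero, Nat.sub_zero, Nat.add_zero, Nat.add_sub_cancel, h_zero, Ring.lie_def]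
  module

theorem crossDefect_add_two {s r : ℕ} (hsr : s ≤ r) :
    crossDefect c b h s (r + 2) =
      commutatorDefect c b h s (r + 2) - commutatorDefect c b h (s + 1) (r + 1) := by
  have hindex : r + 1 + (s + 1) + 1 = r + 2 + s + 1 := by ring
  simp only [crossDefect, commutatorDefect, sum_range_add_two_sub (fun i j ↦ b i * b j) hsr,
    hindex, pow_succ]
  module

theorem crossDefect_comm (hEven : ∀ n, Even n → h n = 0) (s r : ℕ) :
    crossDefect c b h s r = crossDefect c b h r s := by
  simp only [crossDefect, mul_smul, neg_one_pow_smul_eq_of_even_eq_zero hEven s r,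
    add_comm s r, Ring.lie_def]
  module

theorem commutatorDefect_eq_zero_of_le (htwo : IsSMulRegular A (2 : R))
    (hEven : ∀ n, Even n → h n = 0) (hcross : ∀ s r, s ≤ r → crossDefect c b h s r = 0)
    {s r : ℕ} (hsr : s ≤ r) : commutatorDefect c b h s r = 0 := by
  obtain ⟨k, rfl⟩ := Nat.exists_eq_add_of_le hsr
  clear hsr
  induction k using Nat.twoStepInduction generalizing s with
  | zero =>
    exact htwo.right_eq_zero_of_smul
      ((crossDefect_self c b h s).symm.trans (hcross s s le_rfl))
  | one => exact (crossDefect_self_succ c b h hEven s).symm.trans (hcross s (s + 1) (by lia))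
  | more k ih _ =>
    have hinner : commutatorDefect c b h (s + 1) (s + k + 1) = 0 := by
      simpa only [Nat.add_right_comm] using ih (s := s + 1)
    have hstep := crossDefect_add_two c b h (Nat.le_add_right s k)
    rw [hcross s (s + k + 2) (by lia), hinner, sub_zero] at hstep
    exact hstep.symm

theorem crossDefect_eq_zero_of_le (hEven : ∀ n, Even n → h n = 0)
    (hcomm : ∀ s r, s ≤ r → commutatorDefect c b h s r = 0) {s r : ℕ} (hsr : s ≤ r) :
    crossDefect c b h s r = 0 := by
  obtain ⟨k, rfl⟩ := Nat.exists_eq_add_of_le hsr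
  match k with
  | 0 => rw [Nat.add_zero, crossDefect_self, hcomm s s le_rfl, smul_zero]
  | 1 => rw [crossDefect_self_succ c b h hEven, hcomm s (s + 1) hsr]
  | k + 2 =>
    rw [← Nat.add_assoc, crossDefect_add_two c b h (Nat.le_add_right s k),
      hcomm s (s + k + 2) (by lia), hcomm (s + 1) (s + k + 1) (by lia), sub_zero]

theorem crossDefect_eq_zero_iff (htwo : IsSMulRegular A (2 : R))
    (hEven : ∀ n, Even n → h n = 0) :
    (∀ r s, crossDefect c b h s r = 0) ↔ ∀ s r, s ≤ r → commutatorDefect c b h s r = 0 := by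
  refine ⟨fun hcross _ _ ↦
    commutatorDefect_eq_zero_of_le c b h htwo hEven fun s r _ ↦ hcross r s, fun hcomm r s ↦ ?_⟩
  rcases le_total s r with hsr | hrs
  · exact crossDefect_eq_zero_of_le c b h hEven hcomm hsr
  · rw [crossDefect_comm c b h hEven]
    exact crossDefect_eq_zero_of_le c b h hEven hcomm hrs

end Defects

theorem stmt10_general {R A : Type*} [CommRing R] [NonUnitalNonAssocRing A] [Module R A]
    (c : R) (b h : ℕ → A) (htwo : IsSMulRegular A (2 : R))
    (hEven : ∀ n, Even n → h n = 0) :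
    (∀ r s : ℕ,
        ⁅b s, b (r + 1)⁆ - ⁅b (s + 1), b r⁆ + c • (b r * b s + b s * b r)
          = (2 * (-1 : R) ^ s) • h (r + s + 1))
    ↔ (∀ s r : ℕ, s ≤ r →
        ⁅b s, b (r + 1)⁆
          = -(c • ∑ t ∈ range (r - s + 1), b (r - t) * b (s + t))
            + (-1 : R) ^ s • h (r + s + 1)) := by
  simpa only [crossDefect, commutatorDefect, sub_eq_zero] using
    crossDefect_eq_zero_iff c b h htwo hEven

/-- Lemma 4.3(1) of the paper.
Let `A` be an associative `ℂ[ħ]`-algebra, `d` a positive integer, and `b r` (`r ∈ ℕ`),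
`h s` (`s ∈ ℕ`) elements of `A` with `h s = 0` whenever `s` is even.  Then the relations
`[b s, b (r+1)] − [b (s+1), b r] + ħ d (b r b s + b s b r) = 2 (−1)^s h (r+s+1)` (for all `r s`)
hold if and only if the relations
`[b s, b (r+1)] = −ħ d ∑_{t=0}^{r−s} b (r−t) b (s+t) + (−1)^s h (r+s+1)` (for all `s ≤ r`) hold.
Here `ħ = X ∈ ℂ[X]` acts via the algebra structure and `[x,y] = xy − yx`. -/
theorem stmt10 {A : Type*} [Ring A] [Algebra (Polynomial ℂ) A]
    (d : ℕ) (hdpos : 0 < d) (b : ℕ → A) (h : ℕ → A)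
    (hEven : ∀ s : ℕ, Even s → h s = 0) :
    (∀ r s : ℕ,
        ⁅b s, b (r + 1)⁆ - ⁅b (s + 1), b r⁆
          + (((d : Polynomial ℂ) * Polynomial.X) • (b r * b s + b s * b r))
        = (Polynomial.C ((2 : ℂ) * (-1 : ℂ) ^ s)) • h (r + s + 1))
    ↔ (∀ s r : ℕ, s ≤ r →
        ⁅b s, b (r + 1)⁆
          = -(((d : Polynomial ℂ) * Polynomial.X) •
                ∑ t ∈ Finset.range (r - s + 1), b (r - t) * b (s + t))
            + (Polynomial.C ((-1 : ℂ) ^ s)) • h (r + s + 1)) := by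
  have isUnit_two : IsUnit (2 : ℂ[X]) := isUnit_C.mpr (IsUnit.mk0 (2 : ℂ) two_ne_zero)
  simpa only [map_mul, map_pow, map_neg, map_one, map_ofNat] using
    stmt10_general ((d : ℂ[X]) * X) b h (isUnit_two.isSMulRegular A) hEven
end

section
/- Let A be an associative ℂ[ħ]-algebra, d_i a positive integer, c_{ij} an integer, and let b_{j,r} (r∈ℕ) and h_{i,s} (s∈ℕ) be elements of A with h_{i,s}=0 whenever s is even, satisfying [h_{i,1},b_{j,r}]=2c_{ij}b_{j,r+1} for all r. Then the following two families of relations are equivalent: (i) [b_{j,r},h_{i,s+2}]−[b_{j,r+2},h_{i,s}] = −ħ d_i c_{ij}(b_{j,r+1}h_{i,s}+h_{i,s}b_{j,r+1}) + (ħ² d_i² c_{ij}²/4)[b_{j,r},h_{i,s}] for all r∈ℕ and odd s; (ii) [b_{j,r},h_{i,s}] = −ħ d_i c_{ij} Σ_{t=1}^{⌊s/2⌋}(b_{j,r+2t−1}h_{i,s−2t}+h_{i,s−2t}b_{j,r+2t−1}) + (ħ² d_i² c_{ij}²/4) Σ_{t=1}^{⌊s/2⌋}[b_{j,r+2t−2},h_{i,s−2t}]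 − 2c_{ij} b_{j,r+s} for all r∈ℕ and odd s. -/
open Polynomial Finset

/-!
Relation (i) says that `⁅b r, h s⁆` changes by a prescribed amount along each step
`(r + 2, s) ↦ (r, s + 2)`. Following these steps from `(r, s)` down to the column `s = 1` telescopes
the increments into the sums of (ii), and the boundary value `⁅b (r + s - 1), h 1⁆` is the last term
of (ii). Conversely, removing the first summand of (ii) leaves (ii) at `(r + 2, s - 2)`.
-/

theorem sum_range_succ_iterate_tsub {X M : Type*} [AddCommMonoid M]
    (σ : X → X) (G : X → ℕ → M) (x : X) (n : ℕ) :
    ∑ i ∈ range (n + 1), G (σ^[i] x) (n + 1 - (i + 1))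
      = G x n + ∑ i ∈ range n, G (σ^[i] (σ x)) (n - (i + 1)) := by
  simp only [sum_range_succ', Function.iterate_succ_apply, Function.iterate_zero_apply,
    Nat.add_sub_add_right, Nat.sub_zero, add_comm]

theorem forall_succ_eq_add_iff_eq_sum_iterate {X M : Type*} [AddCommMonoid M]
    (σ : X → X) (F G : X → ℕ → M) :
    (∀ x n, F x (n + 1) = G x n + F (σ x) n)
      ↔ ∀ x n, F x n = ∑ i ∈ range n, G (σ^[i] x) (n - (i + 1)) + F (σ^[n] x) 0 := by
  constructor
  · intro hstep x n
    induction n generalizing x with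
    | zero => simp
    | succ n ih =>
      rw [hstep, ih, sum_range_succ_iterate_tsub, add_assoc, Function.iterate_succ_apply]
  · intro hsum x n
    rw [hsum x (n + 1), hsum (σ x) n, sum_range_succ_iterate_tsub, add_assoc,
      Function.iterate_succ_apply]

theorem forall_odd_sub_eq_iff_eq_sum_Icc {M : Type*} [AddCommGroup M] (F G : ℕ → ℕ → M) :
    (∀ r s, Odd s → F r (s + 2) - F (r + 2) s = G r s)
      ↔ ∀ r s, Odd s →
          F r s = ∑ t ∈ Icc 1 (s / 2), G (r + 2 * t - 2) (s - 2 * t) + F (r + s - 1) 1 := by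
  have forall_odd (p : ℕ → ℕ → Prop) :
      (∀ r s, Odd s → p r s) ↔ ∀ r n, p r (2 * n + 1) :=
    forall_congr' fun r => ⟨fun hp n => hp _ ⟨n, rfl⟩, fun hp _ ⟨n, hn⟩ => hn ▸ hp n⟩
  have sum_Icc_eq (r n : ℕ) :
      ∑ t ∈ Icc 1 n, G (r + 2 * t - 2) (2 * n + 1 - 2 * t)
        = ∑ i ∈ range n, G (r + i * 2) (2 * (n - (i + 1)) + 1) := by
    rw [← Ico_add_one_right_eq_Icc, sum_Ico_eq_sum_range, Nat.add_sub_cancel]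
    refine sum_congr rfl fun i hi => ?_
    have hin : i < n := mem_range.mp hi
    congr 1 <;> omega
  simp only [forall_odd, sub_eq_iff_eq_add]
  refine (forall_succ_eq_add_iff_eq_sum_iterate (· + 2)
    (fun r n => F r (2 * n + 1)) (fun r n => G r (2 * n + 1))).trans
    (forall₂_congr fun r n => ?_)
  have half : (2 * n + 1) / 2 = n := by omega
  have boundary : r + (2 * n + 1) - 1 = r + n * 2 := by omega
  simp only [half, boundary, sum_Icc_eq, add_right_iterate, smul_eq_mul, mul_zero, zero_add]

theorem stmt11_general {R A : Type*} [NonUnitalNonAssocRing A] [DistribSMul R A]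
    (α β γ : R) (b h : ℕ → A) (hb : ∀ r, ⁅h 1, b r⁆ = γ • b (r + 1)) :
    (∀ r s : ℕ, Odd s →
        ⁅b r, h (s + 2)⁆ - ⁅b (r + 2), h s⁆
          = -(α • (b (r + 1) * h s + h s * b (r + 1))) + β • ⁅b r, h s⁆)
    ↔ (∀ r s : ℕ, Odd s →
        ⁅b r, h s⁆
          = -(α • ∑ t ∈ Icc 1 (s / 2),
                (b (r + 2 * t - 1) * h (s - 2 * t) + h (s - 2 * t) * b (r + 2 * t - 1)))
            + β • ∑ t ∈ Icc 1 (s / 2), ⁅b (r + 2 * t - 2), h (s - 2 * t)⁆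
            - γ • b (r + s)) := by
  have boundary (r : ℕ) : ⁅b r, h 1⁆ = -(γ • b (r + 1)) := by
    rw [← hb, Ring.lie_def, Ring.lie_def, neg_sub]
  rw [forall_odd_sub_eq_iff_eq_sum_Icc (fun r s => ⁅b r, h s⁆)]
  refine forall₃_congr fun r s hs => ?_
  have anticomm_index : ∀ t ∈ Icc 1 (s / 2), r + 2 * t - 2 + 1 = r + 2 * t - 1 := fun t ht => by
    have := (mem_Icc.mp ht).1
    omega
  rw [boundary, Nat.sub_add_cancel (le_add_left hs.pos), ← sub_eq_add_neg, sum_add_distrib,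
    sum_neg_distrib, ← smul_sum, ← smul_sum,
    sum_congr rfl fun t ht => by rw [anticomm_index t ht]]

/-- Lemma 4.3(2) of the paper.
Let `A` be an associative `ℂ[ħ]`-algebra, `d` a positive integer, `c` an integer, and
`b r` (`r ∈ ℕ`), `h s` (`s ∈ ℕ`) elements of `A` with `h s = 0` for `s` even, satisfying
`[h 1, b r] = 2 c · b (r+1)` for all `r`.  Then the relations
`[b r, h (s+2)] − [b (r+2), h s] = −ħ d c (b (r+1) h s + h s b (r+1)) + (ħ² d² c²/4) [b r, h s]`
(for all `r` and odd `s`) hold if and only if the relations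
`[b r, h s] = −ħ d c ∑_{t=1}^{⌊s/2⌋} (b (r+2t−1) h (s−2t) + h (s−2t) b (r+2t−1))
  + (ħ² d² c²/4) ∑_{t=1}^{⌊s/2⌋} [b (r+2t−2), h (s−2t)] − 2 c · b (r+s)`
(for all `r` and odd `s`) hold.  Here `ħ = X ∈ ℂ[X]` and `[x,y] = xy − yx`. -/
theorem stmt11 {A : Type*} [Ring A] [Algebra (Polynomial ℂ) A]
    (d : ℕ) (hdpos : 0 < d) (c : ℤ) (b : ℕ → A) (h : ℕ → A)
    (hEven : ∀ s : ℕ, Even s → h s = 0)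
    (hR2 : ∀ r : ℕ, ⁅h 1, b r⁆ = (Polynomial.C ((2 : ℂ) * (c : ℂ))) • b (r + 1)) :
    (∀ r s : ℕ, Odd s →
        ⁅b r, h (s + 2)⁆ - ⁅b (r + 2), h s⁆
          = -((Polynomial.C ((d : ℂ) * (c : ℂ)) * Polynomial.X) •
                (b (r + 1) * h s + h s * b (r + 1)))
            + ((Polynomial.C ((d : ℂ) ^ 2 * (c : ℂ) ^ 2 / 4) * Polynomial.X ^ 2) •
                ⁅b r, h s⁆))
    ↔ (∀ r s : ℕ, Odd s →
        ⁅b r, h s⁆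
          = -((Polynomial.C ((d : ℂ) * (c : ℂ)) * Polynomial.X) •
                ∑ t ∈ Finset.Icc 1 (s / 2),
                  (b (r + 2 * t - 1) * h (s - 2 * t) + h (s - 2 * t) * b (r + 2 * t - 1)))
            + ((Polynomial.C ((d : ℂ) ^ 2 * (c : ℂ) ^ 2 / 4) * Polynomial.X ^ 2) •
                ∑ t ∈ Finset.Icc 1 (s / 2), ⁅b (r + 2 * t - 2), h (s - 2 * t)⁆)
            - (Polynomial.C ((2 : ℂ) * (c : ℂ))) • b (r + s)) :=
  stmt11_general _ _ _ b h hR2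
end

section
/- In the associated graded algebra of the twisted Yangian 'Y of type G₂ with respect to the filtration given by deg b_{i,m}=m+1, deg h_{i,r}=r+1, the following identities hold for all k₁,k₂,k₃,k₄,r∈ℕ: [b̆_{1,k₁},[b̆_{1,k₂},b̆_{2,r}]]=0 and [b̆_{2,k₁},[b̆_{2,k₂},[b̆_{2,k₃},[b̆_{2,k₄},b̆_{1,r}]]]]=0, where b̆_{i,m} denotes the image of b_{i,m} in the associated graded algebra. -/
open Polynomial Finset

noncomputable section
set_option synthInstance.maxHeartbeats 1000000
set_option maxHeartbeats 1000000

/-- Generators of the twisted Yangian of type G₂: the `h_{i,s}` and the `b_{j,r}`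
(the symbols `h_{i,s}` for `s` even are set to zero by the relation `hEven`,
implementing the convention `h_{i,s} = 0` for `s` even).  Here `I⁰ = {1,2}` is realized
as `Fin 2`, with the paper's index `1` (resp. `2`) corresponding to `0` (resp. `1`). -/
abbrev YGen2 := (Fin 2 × ℕ) ⊕ (Fin 2 × ℕ)

/-- The generator `h_{i,s}` in the free algebra over `ℂ[ħ]`. -/
def hY2 (i : Fin 2) (s : ℕ) : FreeAlgebra (Polynomial ℂ) YGen2 :=
  FreeAlgebra.ι _ (Sum.inl (i, s))

/-- The generator `b_{j,r}` in the free algebra over `ℂ[ħ]`. -/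
def bY2 (j : Fin 2) (r : ℕ) : FreeAlgebra (Polynomial ℂ) YGen2 :=
  FreeAlgebra.ι _ (Sum.inr (j, r))

/-- The relations of Definition 7.1 of the paper, defining the twisted Yangian of type
`G₂`: relations (4.1)–(4.4) together with the finite Serre relations
`[b_{1,0},[b_{1,0},b_{2,r}]] = −b_{2,r}` and
`[b_{2,0},[b_{2,0},[b_{2,0},[b_{2,0},b_{1,r}]]]] = −10[b_{2,0},[b_{2,0},b_{1,r}]] − 9 b_{1,r}`.
Here `ħ = X ∈ ℂ[X]` and `⁅·,·⁆` is the ring commutator; the convention `h_{i,s} = 0` for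
`s` even is implemented by the relation `hEven`. -/
inductive YRelG2 (C : Fin 2 → Fin 2 → ℤ) (d : Fin 2 → ℕ) :
    FreeAlgebra (Polynomial ℂ) YGen2 → FreeAlgebra (Polynomial ℂ) YGen2 → Prop
  | hEven (i : Fin 2) (s : ℕ) (hs : Even s) : YRelG2 C d (hY2 i s) 0
  | hh (i j : Fin 2) (s r : ℕ) (hs : Odd s) (hr : Odd r) :
      YRelG2 C d ⁅hY2 i s, hY2 j r⁆ 0
  | hb (i j : Fin 2) (r : ℕ) :
      YRelG2 C d ⁅hY2 i 1, bY2 j r⁆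
        ((Polynomial.C ((2 : ℂ) * (C i j : ℂ))) • bY2 j (r + 1))
  | bh (i j : Fin 2) (r s : ℕ) (hs : Odd s) :
      YRelG2 C d (⁅bY2 j r, hY2 i (s + 2)⁆ - ⁅bY2 j (r + 2), hY2 i s⁆)
        (-((Polynomial.C ((d i : ℂ) * (C i j : ℂ)) * Polynomial.X) •
            (bY2 j (r + 1) * hY2 i s + hY2 i s * bY2 j (r + 1)))
          + (Polynomial.C ((d i : ℂ) ^ 2 * (C i j : ℂ) ^ 2 / 4) * Polynomial.X ^ 2) •
              ⁅bY2 j r, hY2 i s⁆)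
  | bb (i j : Fin 2) (s r : ℕ) :
      YRelG2 C d
        (⁅bY2 i s, bY2 j (r + 1)⁆ - ⁅bY2 i (s + 1), bY2 j r⁆
          + (Polynomial.C ((d i : ℂ) * (C i j : ℂ) / 2) * Polynomial.X) •
              (bY2 j r * bY2 i s + bY2 i s * bY2 j r))
        (if i = j then (Polynomial.C ((2 : ℂ) * (-1 : ℂ) ^ s)) • hY2 i (r + s + 1)
          else 0)
  | serre12 (r : ℕ) :
      YRelG2 C d ⁅bY2 0 0, ⁅bY2 0 0, bY2 1 r⁆⁆ (-(bY2 1 r))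
  | serre21 (r : ℕ) :
      YRelG2 C d ⁅bY2 1 0, ⁅bY2 1 0, ⁅bY2 1 0, ⁅bY2 1 0, bY2 0 r⁆⁆⁆⁆
        ((Polynomial.C (-10 : ℂ)) • ⁅bY2 1 0, ⁅bY2 1 0, bY2 0 r⁆⁆
          - (Polynomial.C (9 : ℂ)) • bY2 0 r)

/-- The image of `b_{j,r}` in the twisted Yangian of type `G₂`. -/
def bYQ2 (C : Fin 2 → Fin 2 → ℤ) (d : Fin 2 → ℕ) (j : Fin 2) (r : ℕ) :
    RingQuot (YRelG2 C d) :=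
  RingQuot.mkAlgHom (Polynomial ℂ) (YRelG2 C d) (bY2 j r)

/-- The image of `h_{i,s}` in the twisted Yangian of type `G₂`. -/
def hYQ2 (C : Fin 2 → Fin 2 → ℤ) (d : Fin 2 → ℕ) (i : Fin 2) (s : ℕ) :
    RingQuot (YRelG2 C d) :=
  RingQuot.mkAlgHom (Polynomial ℂ) (YRelG2 C d) (hY2 i s)

/-- The degree of a generator for the filtration of §7.2 of the paper:
`deg b_{i,m} = m + 1`, `deg h_{i,r} = r + 1` (and `deg ħ = 0`). -/
def ydeg2 : YGen2 → ℕ := Sum.elim (fun p => p.2 + 1) (fun p => p.2 + 1)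

/-- The (increasing) filtration on the twisted Yangian of type `G₂` determined by
`deg b_{i,m} = m + 1`, `deg h_{i,r} = r + 1`, `deg ħ = 0`. -/
def Yfil2 (C : Fin 2 → Fin 2 → ℤ) (d : Fin 2 → ℕ) (dd : ℕ) :
    Submodule (Polynomial ℂ) (RingQuot (YRelG2 C d)) :=
  Submodule.span (Polynomial ℂ)
    {y | ∃ l : List YGen2, (l.map ydeg2).sum ≤ dd ∧
      y = (l.map fun gn =>
            RingQuot.mkAlgHom (Polynomial ℂ) (YRelG2 C d) (FreeAlgebra.ι _ gn)).prod}

/-!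
Modulo lower degree, the relation `YRelG2.bb` says `⁅b_{i,s}, b_{j,r+1}⁆ = ⁅b_{i,s+1}, b_{j,r}⁆`,
so the bracket of two symbols depends only on the sum of their indices. For `i = j` it is both
symmetric and antisymmetric in the indices, hence zero: the symbols `b̆_{i,k}` with `i` fixed
commute, and so do the operators of bracketing with them. All the indices of an iterated bracket
of `b̆_{i,k₁}, …, b̆_{i,kₙ}` with `b̆_{j,r}` can therefore be moved into the last entry, giving
the `n`-fold bracket of `b̆_{i,0}` with `b̆_{j,k₁+⋯+kₙ+r}`. This vanishes, since the right-hand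
side of the finite Serre relation has lower degree than its left-hand side.
-/

section ShiftedBrackets

variable {L M : Type*}

theorem lie_eq_lie_zero_add_of_shift [Bracket L M] {x : ℕ → L} {y : ℕ → M}
    (hxy : ∀ s r, ⁅x s, y (r + 1)⁆ = ⁅x (s + 1), y r⁆) (s r : ℕ) :
    ⁅x s, y r⁆ = ⁅x 0, y (s + r)⁆ := by
  induction s generalizing r with
  | zero => rw [zero_add]
  | succ s ih => rw [← hxy, ih, add_right_comm, add_assoc]

variable [LieRing L] {x : ℕ → L}

theorem isSMulRegular_of_isUnit_natCast {R M : Type*} [Semiring R] [AddCommMonoid M] [Module R M]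
    {n : ℕ} (hn : IsUnit (n : R)) : IsSMulRegular M n :=
  fun _ _ huv ↦ hn.isSMulRegular M (by simpa only [Nat.cast_smul_eq_nsmul] using huv)

theorem lie_eq_zero_of_shift (h2 : IsSMulRegular L 2)
    (hx : ∀ s r, ⁅x s, x (r + 1)⁆ = ⁅x (s + 1), x r⁆) (s r : ℕ) : ⁅x s, x r⁆ = 0 := by
  have hsymm : ⁅x s, x r⁆ = ⁅x r, x s⁆ := by
    rw [lie_eq_lie_zero_add_of_shift hx s r, lie_eq_lie_zero_add_of_shift hx r s, add_comm]
  refine h2.right_eq_zero_of_smul ?_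
  rw [two_nsmul]
  nth_rw 2 [hsymm]
  rw [← lie_skew (x r) (x s), add_neg_cancel]

theorem commute_lie_of_lie_eq_zero [AddCommGroup M] [LieRingModule L M] {a b : L}
    (hab : ⁅a, b⁆ = 0) : Function.Commute (fun m : M ↦ ⁅a, m⁆) (fun m : M ↦ ⁅b, m⁆) := by
  intro m
  beta_reduce
  rw [leibniz_lie, hab, zero_lie, zero_add]

theorem foldr_lie_eq_iterate_of_shift [AddCommGroup M] [LieRingModule L M] {y : ℕ → M}
    (hx : ∀ s r, ⁅x s, x r⁆ = 0) (hxy : ∀ s r, ⁅x s, y (r + 1)⁆ = ⁅x (s + 1), y r⁆)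
    (ks : List ℕ) (r : ℕ) :
    ks.foldr (fun k m ↦ ⁅x k, m⁆) (y r) = (fun m ↦ ⁅x 0, m⁆)^[ks.length] (y (ks.sum + r)) := by
  induction ks with
  | nil => simp
  | cons k ks ih =>
    have hcomm : Function.Commute (fun m : M ↦ ⁅x k, m⁆) (fun m : M ↦ ⁅x 0, m⁆) :=
      commute_lie_of_lie_eq_zero (hx k 0)
    rw [List.foldr_cons, ih, (hcomm.iterate_right ks.length).eq, lie_eq_lie_zero_add_of_shift hxy,
      List.length_cons, Function.iterate_succ_apply, List.sum_cons, add_assoc]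

end ShiftedBrackets

section SymbolFamily

variable {R A G : Type*} [CommRing R] [Ring A] [Algebra R A] [Ring G] [Module R G]
  {F : ℕ → Submodule R A} {m n : ℕ} {u v : A}

section GradedMul

variable [SetLike.GradedMul F]

theorem lie_mem_of_gradedMul (hu : u ∈ F m) (hv : v ∈ F n) : ⁅u, v⁆ ∈ F (m + n) := by
  rw [Ring.lie_def]
  exact sub_mem (SetLike.mul_mem_graded hu hv) (add_comm n m ▸ SetLike.mul_mem_graded hv hu)

theorem iterate_lie_mem_of_gradedMul (hu : u ∈ F m) (hv : v ∈ F n) (k : ℕ) :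
    (fun w ↦ ⁅u, w⁆)^[k] v ∈ F (k * m + n) := by
  induction k with
  | zero => simpa using hv
  | succ k ih =>
    rw [Function.iterate_succ_apply', Nat.succ_mul, add_comm (k * m), add_assoc]
    exact lie_mem_of_gradedMul hu ih

end GradedMul

/-- A family of symbol maps for the increasing filtration `F` of `A`, with values in `G`: the maps
`π n` restricted to `F n` are the components `F n → F n / F (n - 1) → G` of a multiplicative map
from the associated graded algebra of `F` to `G`. The values of `π n` outside `F n` are
irrelevant. -/
structure IsSymbolFamily (F : ℕ → Submodule R A) (π : ℕ → A →ₗ[R] G) : Prop where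
  map_succ_eq_zero (n : ℕ) {u : A} (hu : u ∈ F n) : π (n + 1) u = 0
  map_mul_map (m n : ℕ) {u v : A} (hu : u ∈ F m) (hv : v ∈ F n) :
    π m u * π n v = π (m + n) (u * v)

namespace IsSymbolFamily

variable {π : ℕ → A →ₗ[R] G} (hπ : IsSymbolFamily F π)
include hπ

theorem map_eq_zero_of_lt (hF : Monotone F) (hmn : m < n) (hu : u ∈ F m) : π n u = 0 := by
  obtain ⟨n, rfl⟩ := Nat.exists_eq_add_of_lt hmn
  exact hπ.map_succ_eq_zero _ (hF (Nat.le_add_right m n) hu)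

theorem lie_map_map (hu : u ∈ F m) (hv : v ∈ F n) : ⁅π m u, π n v⁆ = π (m + n) ⁅u, v⁆ := by
  rw [Ring.lie_def, Ring.lie_def, hπ.map_mul_map m n hu hv, hπ.map_mul_map n m hv hu, map_sub,
    add_comm n m]

theorem iterate_lie_map [SetLike.GradedMul F] (hu : u ∈ F m) (hv : v ∈ F n) (k : ℕ) :
    (fun w ↦ ⁅π m u, w⁆)^[k] (π n v) = π (k * m + n) ((fun w ↦ ⁅u, w⁆)^[k] v) := by
  induction k with
  | zero => simp
  | succ k ih =>
    rw [Function.iterate_succ_apply', Function.iterate_succ_apply', ih,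
      hπ.lie_map_map hu (iterate_lie_mem_of_gradedMul hu hv k), ← add_assoc, add_comm m,
      Nat.succ_mul]

end IsSymbolFamily

end SymbolFamily

theorem map_ring_lie {A B Φ : Type*} [NonUnitalNonAssocRing A] [NonUnitalNonAssocRing B]
    [FunLike Φ A B] [NonUnitalRingHomClass Φ A B] (f : Φ) (u v : A) : f ⁅u, v⁆ = ⁅f u, f v⁆ := by
  simp only [Ring.lie_def, map_sub, map_mul]

section Filtration

variable {C : Fin 2 → Fin 2 → ℤ} {d : Fin 2 → ℕ}

theorem Yfil2_mono : Monotone (Yfil2 C d) :=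
  fun _ _ hmn ↦ Submodule.span_mono fun _ ⟨l, hl, hy⟩ ↦ ⟨l, hl.trans hmn, hy⟩

instance gradedMul_Yfil2 : SetLike.GradedMul (Yfil2 C d) where
  mul_mem m n u v hu hv := by
    have huv := Submodule.mul_mem_mul hu hv
    rw [Yfil2, Yfil2, Submodule.span_mul_span] at huv
    refine Submodule.span_mono ?_ huv
    rintro _ ⟨_, ⟨l, hl, rfl⟩, _, ⟨l', hl', rfl⟩, rfl⟩
    refine ⟨l ++ l', ?_, ?_⟩
    · rw [List.map_append, List.sum_append]
      exact add_le_add hl hl'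
    · rw [List.map_append, List.prod_append]

theorem bYQ2_mem_Yfil2 (j : Fin 2) (r : ℕ) : bYQ2 C d j r ∈ Yfil2 C d (r + 1) :=
  Submodule.subset_span ⟨[Sum.inr (j, r)], by simp [ydeg2], by simp [bYQ2, bY2]⟩

theorem hYQ2_mem_Yfil2 (i : Fin 2) (s : ℕ) : hYQ2 C d i s ∈ Yfil2 C d (s + 1) :=
  Submodule.subset_span ⟨[Sum.inl (i, s)], by simp [ydeg2], by simp [hYQ2, hY2]⟩

theorem lie_bYQ2_sub_lie_bYQ2 (i j : Fin 2) (s r : ℕ) :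
    ⁅bYQ2 C d i s, bYQ2 C d j (r + 1)⁆ - ⁅bYQ2 C d i (s + 1), bYQ2 C d j r⁆ =
      (if i = j then Polynomial.C ((2 : ℂ) * (-1 : ℂ) ^ s) • hYQ2 C d i (r + s + 1) else 0) -
        (Polynomial.C ((d i : ℂ) * (C i j : ℂ) / 2) * Polynomial.X) •
          (bYQ2 C d j r * bYQ2 C d i s + bYQ2 C d i s * bYQ2 C d j r) := by
  refine eq_sub_of_add_eq (G := RingQuot (YRelG2 C d)) ?_
  simpa only [bYQ2, hYQ2, map_ring_lie, map_add, map_sub, map_smul, map_mul, apply_ite,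
    map_zero] using RingQuot.mkAlgHom_rel ℂ[X] (YRelG2.bb (C := C) (d := d) i j s r)

theorem lie_bYQ2_sub_lie_bYQ2_mem_Yfil2 (i j : Fin 2) (s r : ℕ) :
    ⁅bYQ2 C d i s, bYQ2 C d j (r + 1)⁆ - ⁅bYQ2 C d i (s + 1), bYQ2 C d j r⁆ ∈
      Yfil2 C d (s + r + 2) := by
  have hbb (i j : Fin 2) (s r : ℕ) : bYQ2 C d i s * bYQ2 C d j r ∈ Yfil2 C d (s + r + 2) :=
    Yfil2_mono (by omega) (SetLike.mul_mem_graded (bYQ2_mem_Yfil2 i s) (bYQ2_mem_Yfil2 j r))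
  rw [lie_bYQ2_sub_lie_bYQ2]
  -- Without explicit `R` and `M`, unification does not see that the ring structure of `RingQuot`
  -- extends the semiring structure over which `Yfil2` is a submodule; the same happens below.
  refine Submodule.sub_mem (R := ℂ[X]) (M := RingQuot (YRelG2 C d)) _ ?_
    (Submodule.smul_mem _ _ (add_mem (add_comm r s ▸ hbb j i r s) (hbb i j s r)))
  split_ifs
  · exact Submodule.smul_mem _ _ (Yfil2_mono (by omega) (hYQ2_mem_Yfil2 i (r + s + 1)))
  · exact zero_mem _

theorem iterate_two_lie_bYQ2_mem_Yfil2 (r : ℕ) :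
    (fun w ↦ ⁅bYQ2 C d 0 0, w⁆)^[2] (bYQ2 C d 1 r) ∈ Yfil2 C d (r + 1) := by
  have hserre : ⁅bYQ2 C d 0 0, ⁅bYQ2 C d 0 0, bYQ2 C d 1 r⁆⁆ = -bYQ2 C d 1 r := by
    simpa only [bYQ2, map_ring_lie, map_neg] using
      RingQuot.mkAlgHom_rel ℂ[X] (YRelG2.serre12 (C := C) (d := d) r)
  simp only [Function.iterate_succ, Function.iterate_zero, Function.comp_apply, id_eq, hserre]
  exact Submodule.neg_mem (R := ℂ[X]) (M := RingQuot (YRelG2 C d)) _ (bYQ2_mem_Yfil2 1 r)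

theorem iterate_four_lie_bYQ2_mem_Yfil2 (r : ℕ) :
    (fun w ↦ ⁅bYQ2 C d 1 0, w⁆)^[4] (bYQ2 C d 0 r) ∈ Yfil2 C d (r + 3) := by
  have hserre : ⁅bYQ2 C d 1 0, ⁅bYQ2 C d 1 0, ⁅bYQ2 C d 1 0, ⁅bYQ2 C d 1 0, bYQ2 C d 0 r⁆⁆⁆⁆ =
      Polynomial.C (-10 : ℂ) • ⁅bYQ2 C d 1 0, ⁅bYQ2 C d 1 0, bYQ2 C d 0 r⁆⁆
        - Polynomial.C (9 : ℂ) • bYQ2 C d 0 r := by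
    simpa only [bYQ2, map_ring_lie, map_sub, map_smul] using
      RingQuot.mkAlgHom_rel ℂ[X] (YRelG2.serre21 (C := C) (d := d) r)
  have hlie : ⁅bYQ2 C d 1 0, ⁅bYQ2 C d 1 0, bYQ2 C d 0 r⁆⁆ ∈ Yfil2 C d (r + 3) :=
    Yfil2_mono (by omega) (iterate_lie_mem_of_gradedMul (R := ℂ[X]) (A := RingQuot (YRelG2 C d))
      (bYQ2_mem_Yfil2 1 0) (bYQ2_mem_Yfil2 0 r) 2)
  simp only [Function.iterate_succ, Function.iterate_zero, Function.comp_apply, id_eq, hserre]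
  exact Submodule.sub_mem (R := ℂ[X]) (M := RingQuot (YRelG2 C d)) _
    (Submodule.smul_mem _ _ hlie)
    (Submodule.smul_mem _ _ (Yfil2_mono (by omega) (bYQ2_mem_Yfil2 0 r)))

end Filtration

section Symbols

variable {C : Fin 2 → Fin 2 → ℤ} {d : Fin 2 → ℕ} {G : Type*} [Ring G] [Module ℂ[X] G]

/-- The symbol `b̆_{j,r}` of the generator `b_{j,r}` under a family of maps `π`, taken in the
degree `r + 1` of `b_{j,r}`. -/
def bSymbol (π : ℕ → RingQuot (YRelG2 C d) →ₗ[ℂ[X]] G) (j : Fin 2) (r : ℕ) : G :=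
  π (r + 1) (bYQ2 C d j r)

variable {π : ℕ → RingQuot (YRelG2 C d) →ₗ[ℂ[X]] G}
  (hπ : IsSymbolFamily (R := ℂ[X]) (A := RingQuot (YRelG2 C d)) (Yfil2 C d) π)
include hπ

theorem lie_bSymbol_shift (i j : Fin 2) (s r : ℕ) :
    ⁅bSymbol π i s, bSymbol π j (r + 1)⁆ = ⁅bSymbol π i (s + 1), bSymbol π j r⁆ := by
  rw [bSymbol, bSymbol, bSymbol, bSymbol,
    hπ.lie_map_map (bYQ2_mem_Yfil2 i s) (bYQ2_mem_Yfil2 j (r + 1)),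
    hπ.lie_map_map (bYQ2_mem_Yfil2 i (s + 1)) (bYQ2_mem_Yfil2 j r),
    show s + 1 + 1 + (r + 1) = s + 1 + (r + 1 + 1) by omega, ← sub_eq_zero, ← map_sub]
  exact hπ.map_eq_zero_of_lt Yfil2_mono (by omega) (lie_bYQ2_sub_lie_bYQ2_mem_Yfil2 i j s r)

theorem lie_bSymbol_self (i : Fin 2) (s r : ℕ) : ⁅bSymbol π i s, bSymbol π i r⁆ = 0 := by
  have htwo : IsUnit ((2 : ℕ) : ℂ[X]) := by
    simpa only [Nat.cast_ofNat, map_ofNat] using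
      Polynomial.isUnit_C.2 (isUnit_iff_ne_zero.2 (two_ne_zero (α := ℂ)))
  let _ : LieRing G := LieRing.ofAssociativeRing
  exact lie_eq_zero_of_shift (isSMulRegular_of_isUnit_natCast htwo)
    (lie_bSymbol_shift hπ i i) s r

theorem iterate_lie_bSymbol_eq_zero {i j : Fin 2} {n r : ℕ}
    (hserre : (fun w ↦ ⁅bYQ2 C d i 0, w⁆)^[n] (bYQ2 C d j r) ∈ Yfil2 C d (n + r)) :
    (fun w ↦ ⁅bSymbol π i 0, w⁆)^[n] (bSymbol π j r) = 0 := by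
  rw [bSymbol, bSymbol, hπ.iterate_lie_map (bYQ2_mem_Yfil2 i 0) (bYQ2_mem_Yfil2 j r)]
  exact hπ.map_eq_zero_of_lt Yfil2_mono (by omega) hserre

theorem foldr_lie_bSymbol_eq_zero {i j : Fin 2} (ks : List ℕ)
    (hserre : ∀ r, (fun w ↦ ⁅bYQ2 C d i 0, w⁆)^[ks.length] (bYQ2 C d j r) ∈
      Yfil2 C d (ks.length + r)) (r : ℕ) :
    ks.foldr (fun k w ↦ ⁅bSymbol π i k, w⁆) (bSymbol π j r) = 0 := by
  let _ : LieRing G := LieRing.ofAssociativeRing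
  rw [foldr_lie_eq_iterate_of_shift (x := bSymbol π i)
    (lie_bSymbol_self hπ i) (lie_bSymbol_shift hπ i j)]
  exact iterate_lie_bSymbol_eq_zero hπ (hserre _)

end Symbols

theorem stmt19_general {C : Fin 2 → Fin 2 → ℤ} {d : Fin 2 → ℕ}
    {G : Type*} [Ring G] [Module ℂ[X] G] {π : ℕ → RingQuot (YRelG2 C d) →ₗ[ℂ[X]] G}
    (hπ : IsSymbolFamily (R := ℂ[X]) (A := RingQuot (YRelG2 C d)) (Yfil2 C d) π) :
    (∀ k₁ k₂ r : ℕ, ⁅bSymbol π 0 k₁, ⁅bSymbol π 0 k₂, bSymbol π 1 r⁆⁆ = 0) ∧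
    (∀ k₁ k₂ k₃ k₄ r : ℕ,
      ⁅bSymbol π 1 k₁, ⁅bSymbol π 1 k₂, ⁅bSymbol π 1 k₃, ⁅bSymbol π 1 k₄,
        bSymbol π 0 r⁆⁆⁆⁆ = 0) :=
  ⟨fun k₁ k₂ ↦ foldr_lie_bSymbol_eq_zero hπ [k₁, k₂] fun r ↦
      Yfil2_mono (by grind) (iterate_two_lie_bYQ2_mem_Yfil2 r),
    fun k₁ k₂ k₃ k₄ ↦ foldr_lie_bSymbol_eq_zero hπ [k₁, k₂, k₃, k₄] fun r ↦
      Yfil2_mono (by grind) (iterate_four_lie_bYQ2_mem_Yfil2 r)⟩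

/-- Lemma 7.2 of the paper.
In the associated graded algebra of the twisted Yangian `'Y` of type `G₂` with respect
to the filtration given by `deg b_{i,m} = m + 1`, `deg h_{i,r} = r + 1` (and
`deg ħ = 0`), the identities `[b̆_{1,k₁},[b̆_{1,k₂},b̆_{2,r}]] = 0` and
`[b̆_{2,k₁},[b̆_{2,k₂},[b̆_{2,k₃},[b̆_{2,k₄},b̆_{1,r}]]]] = 0` hold for all
`k₁,k₂,k₃,k₄,r ∈ ℕ`, where `b̆_{i,m}` denotes the image of `b_{i,m}` in the associated
graded algebra (realized via the symbol maps `π`). -/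
theorem stmt19
    -- the Cartan matrix of type G₂ and its symmetrizer
    (C : Fin 2 → Fin 2 → ℤ) (d : Fin 2 → ℕ)
    (hC00 : C 0 0 = 2) (hC11 : C 1 1 = 2) (hC10 : C 1 0 = -3) (hC01 : C 0 1 = -1)
    (hdpos : ∀ i, 0 < d i)
    (hdsym : ∀ i j, (d i : ℤ) * C i j = (d j : ℤ) * C j i)
    -- the associated graded algebra of 'Y, abstractly characterized via symbol maps π
    {G : Type*} [Ring G] [Algebra (Polynomial ℂ) G]
    (π : ℕ → RingQuot (YRelG2 C d) →ₗ[Polynomial ℂ] G)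
    (hker0 : ∀ x ∈ Yfil2 C d 0, (π 0 x = 0 ↔ x = 0))
    (hker : ∀ (dd : ℕ), ∀ x ∈ Yfil2 C d (dd + 1),
      (π (dd + 1) x = 0 ↔ x ∈ Yfil2 C d dd))
    (hmul : ∀ (d₁ d₂ : ℕ) (x y), x ∈ Yfil2 C d d₁ → y ∈ Yfil2 C d d₂ →
      π d₁ x * π d₂ y = π (d₁ + d₂) (x * y))
    (hone : π 0 1 = 1)
    (hspan : Submodule.span (Polynomial ℂ)
      (⋃ dd : ℕ, π dd '' {x | x ∈ Yfil2 C d dd}) = ⊤)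
    (hind : ∀ F : ℕ →₀ RingQuot (YRelG2 C d), (∀ dd, F dd ∈ Yfil2 C d dd) →
      (F.sum fun dd x => π dd x) = 0 → ∀ dd, π dd (F dd) = 0) :
    (∀ k₁ k₂ r : ℕ,
      ⁅π (k₁ + 1) (bYQ2 C d 0 k₁), ⁅π (k₂ + 1) (bYQ2 C d 0 k₂),
        π (r + 1) (bYQ2 C d 1 r)⁆⁆ = 0) ∧
    (∀ k₁ k₂ k₃ k₄ r : ℕ,
      ⁅π (k₁ + 1) (bYQ2 C d 1 k₁), ⁅π (k₂ + 1) (bYQ2 C d 1 k₂),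
        ⁅π (k₃ + 1) (bYQ2 C d 1 k₃), ⁅π (k₄ + 1) (bYQ2 C d 1 k₄),
          π (r + 1) (bYQ2 C d 0 r)⁆⁆⁆⁆ = 0) :=
  stmt19_general ⟨fun n x hx ↦ (hker n x (Yfil2_mono n.le_succ hx)).2 hx, fun m n ↦ hmul m n _ _⟩

end
end
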